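/- Let K ≥ 1 be an integer and set λ = K. Let {x_t}_{t ∈ S} be a finite family of vectors in ℝ^d with ‖x_t‖ ≤ 1 for every t ∈ S, and for V ⊆ S define A_V = λ·I + Σ_{t ∈ V} x_t x_tᵀ. Let x ∈ ℝ^d and c ≥ 0 satisfy xᵀ A_S^{−1} x ≤ c. Then for every U ⊆ S with |U| ≤ K, xᵀ A_{S\U}^{−1} x ≤ e · c, where e is Euler's number. -/

import Mathlib

/-!
Write `A = A_S`, `B = A_{S \ U}`. Since `‖x t‖ ≤ 1` and `|U| ≤ K`, Cauchy–Schwarz gives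
`∑_{t ∈ U} ⟨x t, y⟩² ≤ K ‖y‖² ≤ yᵀ B y`, so `A ≤ 2 B` in the Loewner order. Inversion reverses
the order, hence `B⁻¹ ≤ 2 A⁻¹`, and the factor `2` is below `e`; the binomial expansion giving
`(1 + 1/K)^K` is not needed. The order reversal is obtained by hand: with `y = B⁻¹ v` and
`w = A⁻¹ v`, expanding `0 ≤ (y - 2w)ᵀ A (y - 2w)` and using `yᵀ A y ≤ 2 yᵀ B y = 2 vᵀ y` gives
`vᵀ y ≤ 2 vᵀ w`.
-/

open Matrix

/-- The bilinear form of `k • 1 + ∑ t ∈ V, x t (x t)ᵀ`, written so that its symmetry is visible. -/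
lemma dotProduct_regGram_mulVec {d : ℕ} {ι : Type*} (k : ℝ) (V : Finset ι)
    (x : ι → (Fin d → ℝ)) (y z : Fin d → ℝ) :
    y ⬝ᵥ ((k • (1 : Matrix (Fin d) (Fin d) ℝ) + ∑ t ∈ V, vecMulVec (x t) (x t)) *ᵥ z) =
      k * (y ⬝ᵥ z) + ∑ t ∈ V, (x t ⬝ᵥ y) * (x t ⬝ᵥ z) := by
  rw [add_mulVec, dotProduct_add, smul_mulVec, one_mulVec, dotProduct_smul, smul_eq_mul,
    sum_mulVec, dotProduct_sum]
  congr 1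
  refine Finset.sum_congr rfl fun t _ => ?_
  rw [vecMulVec_mulVec, op_smul_eq_smul, dotProduct_smul, smul_eq_mul, dotProduct_comm y, mul_comm]

lemma regGram_mulVec_inv_mulVec {d : ℕ} {ι : Type*} {k : ℝ} (hk : 0 < k) (V : Finset ι)
    (x : ι → (Fin d → ℝ)) (v : Fin d → ℝ) :
    (k • (1 : Matrix (Fin d) (Fin d) ℝ) + ∑ t ∈ V, vecMulVec (x t) (x t)) *ᵥ
      ((k • (1 : Matrix (Fin d) (Fin d) ℝ) + ∑ t ∈ V, vecMulVec (x t) (x t))⁻¹ *ᵥ v) = v := by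
  have hpd : (k • (1 : Matrix (Fin d) (Fin d) ℝ) +
      ∑ t ∈ V, vecMulVec (x t) (x t)).PosDef := by
    refine (PosDef.one.smul hk).add_posSemidef (posSemidef_sum _ fun t _ => ?_)
    simpa using posSemidef_vecMulVec_self_star (x t)
  rw [mulVec_mulVec, mul_nonsing_inv _ ((isUnit_iff_isUnit_det _).mp hpd.isUnit), one_mulVec]

/-- With regularization `λ = K`, up to `K` rank-one deletions inflate the inverse-Gram
quadratic form at a point by at most a factor `e`: if `A_V = K·I + Σ_{t ∈ V} x_t x_tᵀ`,
`‖x_t‖ ≤ 1` and `xᵀ A_S⁻¹ x ≤ c`, then for every `U ⊆ S` with `|U| ≤ K`,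
`xᵀ A_{S\U}⁻¹ x ≤ e · c`. -/
theorem quadratic_form_after_deletions_e_bound {d : ℕ} {ι : Type*} [DecidableEq ι]
    (K : ℕ) (hK : 1 ≤ K) (S : Finset ι) (x : ι → (Fin d → ℝ))
    (hnorm : ∀ t ∈ S, Real.sqrt (x t ⬝ᵥ x t) ≤ 1)
    (v : Fin d → ℝ) (c : ℝ) (hc : 0 ≤ c)
    (hv : v ⬝ᵥ (((K : ℝ) • (1 : Matrix (Fin d) (Fin d) ℝ) +
        ∑ t ∈ S, vecMulVec (x t) (x t))⁻¹ *ᵥ v) ≤ c)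
    (U : Finset ι) (hU : U ⊆ S) (hUcard : U.card ≤ K) :
    v ⬝ᵥ (((K : ℝ) • (1 : Matrix (Fin d) (Fin d) ℝ) +
        ∑ t ∈ S \ U, vecMulVec (x t) (x t))⁻¹ *ᵥ v) ≤ Real.exp 1 * c := by
  have hKpos : (0 : ℝ) < K := by exact_mod_cast hK
  have hA := regGram_mulVec_inv_mulVec hKpos S x v
  have hB := regGram_mulVec_inv_mulVec hKpos (S \ U) x v
  have formA := dotProduct_regGram_mulVec (K : ℝ) S x
  have formB := dotProduct_regGram_mulVec (K : ℝ) (S \ U) x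
  set A := (K : ℝ) • (1 : Matrix (Fin d) (Fin d) ℝ) + ∑ t ∈ S, vecMulVec (x t) (x t)
  set B := (K : ℝ) • (1 : Matrix (Fin d) (Fin d) ℝ) + ∑ t ∈ S \ U, vecMulVec (x t) (x t)
  set w := A⁻¹ *ᵥ v
  set y := B⁻¹ *ᵥ v
  have hyy : 0 ≤ y ⬝ᵥ y := Finset.sum_nonneg fun i _ => mul_self_nonneg (y i)
  have hsumU : ∑ t ∈ U, (x t ⬝ᵥ y) * (x t ⬝ᵥ y) ≤ K * (y ⬝ᵥ y) := by
    have hterm : ∀ t ∈ U, (x t ⬝ᵥ y) * (x t ⬝ᵥ y) ≤ y ⬝ᵥ y := by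
      intro t ht
      have hx : x t ⬝ᵥ x t ≤ 1 := by simpa using Real.sqrt_le_iff.mp (hnorm t (hU ht))
      have hcs : (x t ⬝ᵥ y) ^ 2 ≤ (x t ⬝ᵥ x t) * (y ⬝ᵥ y) := by
        simpa only [dotProduct, sq] using
          Finset.sum_mul_sq_le_sq_mul_sq Finset.univ (x t) y
      nlinarith
    calc _ ≤ U.card • (y ⬝ᵥ y) := Finset.sum_le_card_nsmul _ _ _ hterm
      _ = (U.card : ℝ) * (y ⬝ᵥ y) := nsmul_eq_mul _ _
      _ ≤ K * (y ⬝ᵥ y) := by gcongr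
  have hyAy : y ⬝ᵥ (A *ᵥ y) ≤ 2 * (v ⬝ᵥ y) := by
    have hyBy : y ⬝ᵥ (B *ᵥ y) = v ⬝ᵥ y := by rw [hB, dotProduct_comm]
    have hsplit := Finset.sum_sdiff (f := fun t => (x t ⬝ᵥ y) * (x t ⬝ᵥ y)) hU
    have hrest : 0 ≤ ∑ t ∈ S \ U, (x t ⬝ᵥ y) * (x t ⬝ᵥ y) :=
      Finset.sum_nonneg fun t _ => mul_self_nonneg _
    rw [formB] at hyBy
    rw [formA]
    linarith
  have hsq : 0 ≤ (y - (2 : ℝ) • w) ⬝ᵥ (A *ᵥ (y - (2 : ℝ) • w)) := by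
    rw [formA]
    exact add_nonneg (mul_nonneg hKpos.le (Finset.sum_nonneg fun i _ => mul_self_nonneg _))
      (Finset.sum_nonneg fun t _ => mul_self_nonneg _)
  have hwAy : w ⬝ᵥ (A *ᵥ y) = v ⬝ᵥ y := by
    have hsymm : w ⬝ᵥ (A *ᵥ y) = y ⬝ᵥ (A *ᵥ w) := by
      rw [formA, formA, dotProduct_comm w y]
      simp only [mul_comm]
    rw [hsymm, hA, dotProduct_comm]
  have hexpand : (y - (2 : ℝ) • w) ⬝ᵥ (A *ᵥ (y - (2 : ℝ) • w)) =
      y ⬝ᵥ (A *ᵥ y) - 4 * (v ⬝ᵥ y) + 4 * (v ⬝ᵥ w) := by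
    rw [mulVec_sub, mulVec_smul, hA]
    simp only [sub_dotProduct, dotProduct_sub, smul_dotProduct, dotProduct_smul, smul_eq_mul, hwAy,
      dotProduct_comm y v, dotProduct_comm w v]
    ring
  have htwo : (2 : ℝ) ≤ Real.exp 1 := by
    linarith [Real.add_one_le_exp (1 : ℝ)]
  calc v ⬝ᵥ y ≤ 2 * c := by linarith
    _ ≤ Real.exp 1 * c := by gcongr
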